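/- arXiv:2201.03081 — 2 statements merged into one kernel-verified Lean document; each statement's English description precedes it below -/
import Mathlib

section
/- Let A = [[−2,−1],[1,0]], B = [[2,1],[−1,0]], C = [[2,−1],[1,0]], D = [[−2,1],[−1,0]] be integer matrices, and for each natural number k set w_A = Aᵏ·(1,1)ᵀ, w_B = Bᵏ·(1,1)ᵀ, w_C = Cᵏ·(1,−1)ᵀ, w_D = Dᵏ·(1,−1)ᵀ. Then the absolute value of the first entry of each of w_A, w_B, w_C, w_D equals 2k+1, and the absolute value of the second entry of each equals |2k−1|. In particular, the maximum over these four vectors of the absolute value of the first entry is 2k+1, which is a strictly increasing function of k. -/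
open Matrix

/-!
For signs `ε` and `δ`, the four matrices are `ε (1 + N)` with `N = [[1, -δ], [δ, -1]]`, and the
initial vectors are `(1, -δ)`. Since `δ ^ 2 = 1` forces `N ^ 2 = 0`, the `k`-th power is
`ε ^ k (1 + k N)`, which sends `(1, -δ)` to `ε ^ k (2 k + 1, δ (2 k - 1))`.
-/

theorem one_add_pow_of_mul_self_eq_zero {R : Type*} [Semiring R] {x : R} (hx : x * x = 0)
    (k : ℕ) : (1 + x) ^ k = 1 + k • x := by
  induction k with
  | zero => simp
  | succ k ih =>
    rw [pow_succ, ih, add_mul, mul_add, smul_mul_assoc, mul_add, hx, succ_nsmul']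
    simp only [mul_one, one_mul, add_zero, add_assoc]

section CommRing

variable {R : Type*} [CommRing R]

/-- The nilpotent part of the four matrices, for a sign `δ`. Signs are encoded
as ring elements, constrained by `δ * δ = 1` or `|δ| = 1` where needed. -/
def nilpotentPart (δ : R) : Matrix (Fin 2) (Fin 2) R :=
  !![1, -δ; δ, -1]

/-- The matrix `ε (1 + N)`, with `N = nilpotentPart δ`, through which one step of the iteration
acts. The matrices `A`, `B`, `C`, `D` are given by `(ε, δ) = (-1, -1)`, `(1, -1)`, `(1, 1)`,
`(-1, 1)`. -/
def signedUnipotent (ε δ : R) : Matrix (Fin 2) (Fin 2) R :=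
  ε • (1 + nilpotentPart δ)

theorem signedUnipotent_eq (ε δ : R) :
    signedUnipotent ε δ = !![2 * ε, -(ε * δ); ε * δ, 0] := by
  ext i j
  fin_cases i <;> fin_cases j <;>
    simp [signedUnipotent, nilpotentPart, one_add_one_eq_two, mul_comm]

theorem nilpotentPart_mul_self {δ : R} (hδ : δ * δ = 1) :
    nilpotentPart δ * nilpotentPart δ = 0 := by
  ext i j
  fin_cases i <;> fin_cases j <;> simp [nilpotentPart, Matrix.mul_apply, hδ]

theorem signedUnipotent_pow (ε : R) {δ : R} (hδ : δ * δ = 1) (k : ℕ) :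
    signedUnipotent ε δ ^ k = ε ^ k • (1 + k • nilpotentPart δ) := by
  rw [signedUnipotent, smul_pow, one_add_pow_of_mul_self_eq_zero (nilpotentPart_mul_self hδ)]

theorem nilpotentPart_mulVec {δ : R} (hδ : δ * δ = 1) :
    nilpotentPart δ *ᵥ ![1, -δ] = ![2, 2 * δ] := by
  ext i
  fin_cases i <;> simp [nilpotentPart, hδ, one_add_one_eq_two, two_mul]

theorem signedUnipotent_pow_mulVec (ε : R) {δ : R} (hδ : δ * δ = 1) (k : ℕ) :
    signedUnipotent ε δ ^ k *ᵥ ![1, -δ] = ε ^ k • ![2 * (k : R) + 1, δ * (2 * k - 1)] := by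
  rw [signedUnipotent_pow ε hδ, smul_mulVec, add_mulVec, one_mulVec, smul_mulVec,
    nilpotentPart_mulVec hδ]
  congr 1
  ext i
  fin_cases i <;> simp <;> ring

end CommRing

section LinearOrder

variable {R : Type*} [CommRing R] [LinearOrder R] [IsStrictOrderedRing R]

theorem abs_signedUnipotent_pow_mulVec_zero {ε δ : R} (hε : |ε| = 1) (hδ : |δ| = 1) (k : ℕ) :
    |(signedUnipotent ε δ ^ k *ᵥ ![1, -δ]) 0| = 2 * k + 1 := by
  have hδ_sq : δ * δ = 1 := by rw [← abs_mul_abs_self, hδ, one_mul]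
  have h_nonneg : (0 : R) ≤ 2 * k + 1 := by positivity
  simp [signedUnipotent_pow_mulVec ε hδ_sq, abs_mul, hε, abs_of_nonneg h_nonneg]

theorem abs_signedUnipotent_pow_mulVec_one {ε δ : R} (hε : |ε| = 1) (hδ : |δ| = 1) (k : ℕ) :
    |(signedUnipotent ε δ ^ k *ᵥ ![1, -δ]) 1| = |2 * (k : R) - 1| := by
  have hδ_sq : δ * δ = 1 := by rw [← abs_mul_abs_self, hδ, one_mul]
  simp [signedUnipotent_pow_mulVec ε hδ_sq, abs_mul, hε, hδ]

theorem stmt_9_general (k : ℕ) :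
    let wA : Fin 2 → R := (!![(-2 : R), -1; 1, 0] ^ k) *ᵥ ![1, 1]
    let wB : Fin 2 → R := (!![(2 : R), 1; -1, 0] ^ k) *ᵥ ![1, 1]
    let wC : Fin 2 → R := (!![(2 : R), -1; 1, 0] ^ k) *ᵥ ![1, -1]
    let wD : Fin 2 → R := (!![(-2 : R), 1; -1, 0] ^ k) *ᵥ ![1, -1]
    (|wA 0| = 2 * k + 1 ∧ |wB 0| = 2 * k + 1 ∧ |wC 0| = 2 * k + 1 ∧ |wD 0| = 2 * k + 1) ∧
    (|wA 1| = |2 * (k : R) - 1| ∧ |wB 1| = |2 * (k : R) - 1| ∧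
      |wC 1| = |2 * (k : R) - 1| ∧ |wD 1| = |2 * (k : R) - 1|) ∧
    max (max |wA 0| |wB 0|) (max |wC 0| |wD 0|) = 2 * k + 1 ∧
    StrictMono (fun k : ℕ => (2 * k + 1 : R)) := by
  intro wA wB wC wD
  have hwA : wA = signedUnipotent (-1) (-1) ^ k *ᵥ ![1, -(-1)] := by simp [wA, signedUnipotent_eq]
  have hwB : wB = signedUnipotent 1 (-1) ^ k *ᵥ ![1, -(-1)] := by simp [wB, signedUnipotent_eq]
  have hwC : wC = signedUnipotent 1 1 ^ k *ᵥ ![1, -1] := by simp [wC, signedUnipotent_eq]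
  have hwD : wD = signedUnipotent (-1) 1 ^ k *ᵥ ![1, -1] := by simp [wD, signedUnipotent_eq]
  have h_one : |(1 : R)| = 1 := abs_one
  have h_neg_one : |(-1 : R)| = 1 := by rw [abs_neg, abs_one]
  have h_strictMono : StrictMono (fun k : ℕ => (2 * k + 1 : R)) :=
    (Nat.strictMono_cast.const_mul two_pos).add_const 1
  simp only [hwA, hwB, hwC, hwD, abs_signedUnipotent_pow_mulVec_zero,
    abs_signedUnipotent_pow_mulVec_one, h_one, h_neg_one, max_self, h_strictMono, and_self]

end LinearOrder

/-- With `A = [[−2,−1],[1,0]]`, `B = [[2,1],[−1,0]]`, `C = [[2,−1],[1,0]]`,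
`D = [[−2,1],[−1,0]]` over `ℤ` and, for each `k : ℕ`, `w_A = Aᵏ·(1,1)ᵀ`, `w_B = Bᵏ·(1,1)ᵀ`,
`w_C = Cᵏ·(1,−1)ᵀ`, `w_D = Dᵏ·(1,−1)ᵀ`: the absolute value of the first entry of each of these
vectors is `2k+1`, the absolute value of the second entry of each is `|2k−1|`, so the maximum of
the absolute values of the first entries is `2k+1`, a strictly increasing function of `k`. -/
theorem stmt_9 (k : ℕ) :
    let wA : Fin 2 → ℤ := (!![(-2 : ℤ), -1; 1, 0] ^ k) *ᵥ ![1, 1]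
    let wB : Fin 2 → ℤ := (!![(2 : ℤ), 1; -1, 0] ^ k) *ᵥ ![1, 1]
    let wC : Fin 2 → ℤ := (!![(2 : ℤ), -1; 1, 0] ^ k) *ᵥ ![1, -1]
    let wD : Fin 2 → ℤ := (!![(-2 : ℤ), 1; -1, 0] ^ k) *ᵥ ![1, -1]
    (|wA 0| = 2 * k + 1 ∧ |wB 0| = 2 * k + 1 ∧ |wC 0| = 2 * k + 1 ∧ |wD 0| = 2 * k + 1) ∧
    (|wA 1| = |2 * (k : ℤ) - 1| ∧ |wB 1| = |2 * (k : ℤ) - 1| ∧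
      |wC 1| = |2 * (k : ℤ) - 1| ∧ |wD 1| = |2 * (k : ℤ) - 1|) ∧
    max (max |wA 0| |wB 0|) (max |wC 0| |wD 0|) = 2 * k + 1 ∧
    StrictMono (fun k : ℕ => (2 * k + 1 : ℤ)) := by
  exact stmt_9_general k
end

section
/- Let A be the integer matrix [[−2, −1], [1, 0]] and for each natural number k set v_k = Aᵏ·(1,1)ᵀ ∈ ℤ². Then for all natural numbers k ≠ l, one has v_k ≠ v_l and v_k ≠ −v_l; consequently the vectors v_k for k ∈ ℕ are pairwise distinct even up to an overall sign. -/
open Matrix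

/-!
The matrix is minus a unipotent one: `A = -(1 + N)` with `N ^ 2 = 0`. Hence
`A ^ k • u = (-1) ^ k • (u + k • N • u)` moves along a line in the direction `N • u ≠ 0`, up to
sign. If two such vectors are proportional, applying `N`, which maps `u + k • N • u` to `N • u`,
determines the factor, and comparing the coefficients of `N • u` gives equality of the exponents.
-/

section Semiring

variable {R : Type*} [Semiring R] {n : R}

theorem one_add_pow_of_sq_eq_zero (hn : n ^ 2 = 0) (k : ℕ) : (1 + n) ^ k = 1 + k • n := by
  induction k with
  | zero => simp
  | succ k ih =>
    calc (1 + n) ^ (k + 1) = (1 + k • n) * (1 + n) := by rw [pow_succ, ih]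
      _ = 1 + n + k • n + k • n ^ 2 := by
        rw [add_mul, one_mul, mul_add, mul_one, smul_mul_assoc, ← sq, ← add_assoc]
      _ = 1 + (k + 1) • n := by rw [hn, smul_zero, add_zero, succ_nsmul', add_assoc]

theorem mul_one_add_pow_of_sq_eq_zero (hn : n ^ 2 = 0) (k : ℕ) : n * (1 + n) ^ k = n := by
  rw [one_add_pow_of_sq_eq_zero hn, mul_add, mul_one, mul_smul_comm, ← sq, hn, smul_zero, add_zero]

end Semiring

section Module

variable {R M : Type*} [Ring R] [AddCommGroup M] [Module R M] [IsAddTorsionFree M] {u : M}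

theorem eq_of_one_add_pow_smul_eq_zsmul {n : R} (hn : n ^ 2 = 0) (hu : n • u ≠ 0) {k l : ℕ} {c : ℤ}
    (h : (1 + n) ^ k • u = c • (1 + n) ^ l • u) : k = l := by
  have factor_eq_one : c = 1 := by
    have h_apply : n • u = c • n • u := by
      simpa only [smul_comm n c, ← mul_smul n, mul_one_add_pow_of_sq_eq_zero hn]
        using congrArg (n • ·) h
    exact smul_left_injective ℤ hu (by simpa only [one_smul] using h_apply.symm)
  have coeff_eq : (k : ℤ) • n • u = (l : ℤ) • n • u := by
    simpa only [natCast_zsmul, factor_eq_one, one_smul, one_add_pow_of_sq_eq_zero hn, add_smul,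
      smul_assoc, add_right_inj] using h
  exact_mod_cast smul_left_injective ℤ hu coeff_eq

theorem stmt_10_general {a : R} (ha : (1 + a) ^ 2 = 0) (hu : (1 + a) • u ≠ 0) {k l : ℕ}
    (hkl : k ≠ l) (c : ℤ) : a ^ k • u ≠ c • a ^ l • u := by
  intro h
  obtain ⟨n, rfl⟩ : ∃ n, a = -(1 + n) := ⟨-(1 + a), by abel⟩
  have hn : n ^ 2 = 0 := by simpa using ha
  have hnu : n • u ≠ 0 := by simpa using hu
  have neg_pow_smul (m : ℕ) : (-(1 + n)) ^ m • u = (-1 : ℤ) ^ m • (1 + n) ^ m • u := by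
    rw [neg_pow, mul_smul, ← Int.cast_smul_eq_zsmul R]
    norm_cast
  rw [neg_pow_smul, neg_pow_smul] at h
  refine hkl (eq_of_one_add_pow_smul_eq_zsmul (c := (-1) ^ k * (c * (-1) ^ l)) hn hnu ?_)
  rw [mul_smul, mul_smul, ← h, ← mul_smul, ← mul_pow, neg_one_mul, neg_neg, one_pow, one_smul]

end Module

/-- For `A = [[−2,−1],[1,0]]` over `ℤ` and `v_k = Aᵏ·(1,1)ᵀ`, the vectors `v_k` are pairwise
distinct even up to an overall sign: for `k ≠ l`, `v_k ≠ v_l` and `v_k ≠ −v_l`. -/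
theorem stmt_10 :
    let v : ℕ → Fin 2 → ℤ := fun k => (!![(-2 : ℤ), -1; 1, 0] ^ k) *ᵥ ![1, 1]
    ∀ k l : ℕ, k ≠ l → v k ≠ v l ∧ v k ≠ -v l := by
  intro v k l hkl
  have not_multiple (c : ℤ) : v k ≠ c • v l :=
    stmt_10_general (a := !![(-2 : ℤ), -1; 1, 0]) (u := ![(1 : ℤ), 1]) (by decide) (by decide) hkl c
  exact ⟨by simpa using not_multiple 1, by simpa using not_multiple (-1)⟩
end
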